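/- arXiv:1901.07736 — 2 statements merged into one kernel-verified Lean document; each statement's English description precedes it below -/
import Mathlib

section
/- Let φ(z) = az with 0 < a < 1 (a real). Then the numerical range of the composition operator C_φ on F² is the half-open interval (0, 1]; in particular 0 ∉ W(C_φ). -/
open MeasureTheory Complex

/-- The Gaussian measure `π⁻¹ e^{-|z|²} dA(z)` on `ℂ`. -/
noncomputable def gaussMeasure : Measure ℂ :=
  (volume : Measure ℂ).withDensity fun z => ENNReal.ofReal (Real.exp (-(‖z‖ ^ 2)) / Real.pi)

/-- A function is entire if it is differentiable on all of `ℂ`. -/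
def Entire (f : ℂ → ℂ) : Prop := Differentiable ℂ f

/-- The squared Fock-space norm `∫ |f|² dμ`. -/
noncomputable def fockNormSq (f : ℂ → ℂ) : ℝ := ∫ z, ‖f z‖ ^ 2 ∂gaussMeasure

/-- Membership in the Fock space `F²`: entire and square integrable w.r.t. the Gaussian. -/
def MemFock (f : ℂ → ℂ) : Prop :=
  Entire f ∧ Integrable (fun z => ‖f z‖ ^ 2) gaussMeasure

/-- The Fock-space inner product `⟨f, g⟩ = ∫ f ḡ dμ`. -/
noncomputable def fockInner (f g : ℂ → ℂ) : ℂ :=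
  ∫ z, f z * (starRingEnd ℂ) (g z) ∂gaussMeasure

/-- The weighted composition operator `C_{ψ,φ} f = ψ · (f ∘ φ)`. -/
def wcomp (ψ φ f : ℂ → ℂ) : ℂ → ℂ := fun z => ψ z * f (φ z)

/-- Boundedness of `C_{ψ,φ}` on `F²`. -/
def BoundedWCO (ψ φ : ℂ → ℂ) : Prop :=
  ∃ C : ℝ, ∀ f, MemFock f →
    MemFock (wcomp ψ φ f) ∧ fockNormSq (wcomp ψ φ f) ≤ C * fockNormSq f

/-- The numerical range `W(C_{ψ,φ}) = {⟨C_{ψ,φ} f, f⟩ : ‖f‖ = 1}` on `F²`. -/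
noncomputable def numRange (ψ φ : ℂ → ℂ) : Set ℂ :=
  {w | ∃ f, MemFock f ∧ fockNormSq f = 1 ∧ w = fockInner (wcomp ψ φ f) f}

/-- The point spectrum of `C_{ψ,φ}` on `F²`. -/
def pointSpectrum (ψ φ : ℂ → ℂ) : Set ℂ :=
  {lam | ∃ f, MemFock f ∧ f ≠ 0 ∧ wcomp ψ φ f = fun z => lam * f z}

/-- Compactness of `C_{ψ,φ}` on `F²`: it is bounded and the image of every sequence in the
unit ball of `F²` has a subsequence which is Cauchy in the `F²` norm. -/
def CompactWCO (ψ φ : ℂ → ℂ) : Prop :=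
  BoundedWCO ψ φ ∧ ∀ f : ℕ → ℂ → ℂ, (∀ k, MemFock (f k) ∧ fockNormSq (f k) ≤ 1) →
    ∃ g : ℕ → ℕ, StrictMono g ∧ ∀ ε : ℝ, 0 < ε → ∃ N : ℕ, ∀ i, N ≤ i → ∀ j, N ≤ j →
      fockNormSq (fun z => wcomp ψ φ (f (g i)) z - wcomp ψ φ (f (g j)) z) < ε

/-!
The normalized monomials `zⁿ / √n!` are orthonormal in `F²` and diagonalize `C_{az}`, with
eigenvalues `aⁿ`. A unit vector `f` therefore gives `⟨C_{az} f, f⟩ = ∑ aⁿ wₙ`, where the squared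
coefficients `wₙ ≥ 0` of `f` are not all zero and have sum at most `1` by Bessel's inequality; for
`0 < a < 1` this number lies in `(0, 1]`. Conversely, the reproducing kernels `e^{wz}` have Rayleigh
quotients `e^{-(1 - a)|w|²}`, which already fill `(0, 1]`.
-/

open scoped Real Nat InnerProductSpace ComplexConjugate Interval

section RotationInvariance

lemma smulInvariantMeasure_withDensity {G α : Type*} [SMul G α] [MeasurableSpace α]
    [MeasurableConstSMul G α] {μ : Measure α} [SMulInvariantMeasure G α μ] {w : α → ENNReal}
    (hw : Measurable w) (hinv : ∀ (g : G) x, w (g • x) = w x) :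
    SMulInvariantMeasure G α (μ.withDensity w) where
  measure_preimage_smul g s hs := by
    have hg : MeasurePreserving (g • ·) μ μ := measurePreserving_smul g μ
    rw [withDensity_apply _ hs, withDensity_apply _ (hg.measurable hs),
      ← hg.setLIntegral_comp_preimage hs hw]
    simp only [hinv]

instance smulInvariantMeasure_circle_volume : SMulInvariantMeasure Circle ℂ volume where
  measure_preimage_smul u _ hs :=
    (rotation u).measurePreserving.measure_preimage hs.nullMeasurableSet

variable {E : Type*} [NormedAddCommGroup E] [NormedSpace ℝ E]

lemma circleAverage_zero_norm (F : ℂ → E) (z : ℂ) :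
    Real.circleAverage F 0 ‖z‖ = (2 * π)⁻¹ • ∫ θ in 0..2 * π, F (Circle.exp θ • z) := by
  rw [Real.circleAverage_eq_integral_add (arg z)]
  congr! with θ
  conv_rhs => rw [← norm_mul_exp_arg_mul_I z]
  rw [circleMap_zero, Circle.smul_def, Circle.coe_exp, ofReal_add, add_mul, exp_add, smul_eq_mul]
  ring

lemma integral_circleAverage_zero_norm [CompleteSpace E] {μ : Measure ℂ} [SFinite μ]
    [SMulInvariantMeasure Circle ℂ μ] {F : ℂ → E} (hF : Integrable F μ) :
    ∫ z, Real.circleAverage F 0 ‖z‖ ∂μ = ∫ z, F z ∂μ := by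
  have hrot (u : Circle) : MeasurePreserving (u • · : ℂ → ℂ) μ μ := measurePreserving_smul u μ
  have hmeas : Measurable (Function.uncurry fun (θ : ℝ) (z : ℂ) => Circle.exp θ • z) :=
    ((Circle.exp.continuous.comp continuous_fst).smul continuous_snd).measurable
  have : IsFiniteMeasure (volume.restrict (Ι 0 (2 * π))) := by
    rw [Set.uIoc_of_le Real.two_pi_pos.le]
    infer_instance
  have hskew : MeasurePreserving (fun p : ℝ × ℂ => (p.1, Circle.exp p.1 • p.2))
      ((volume.restrict (Ι 0 (2 * π))).prod μ) ((volume.restrict (Ι 0 (2 * π))).prod μ) :=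
    (MeasurePreserving.id _).skew_product hmeas (.of_forall fun θ => (hrot _).map_eq)
  have hint : Integrable (Function.uncurry fun (θ : ℝ) z => F (Circle.exp θ • z))
      ((volume.restrict (Ι 0 (2 * π))).prod μ) :=
    hskew.integrable_comp_of_integrable (hF.comp_snd _)
  have hval (u : Circle) : ∫ z, F (u • z) ∂μ = ∫ z, F z ∂μ :=
    (hrot u).integral_comp (Homeomorph.smul u).measurableEmbedding F
  simp only [circleAverage_zero_norm]
  rw [integral_smul, ← intervalIntegral_integral_swap hint]
  simp only [hval, intervalIntegral.integral_const, sub_zero]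
  exact inv_smul_smul₀ Real.two_pi_pos.ne' _

end RotationInvariance

lemma circleAverage_conj_pow_smul {E : Type*} [NormedAddCommGroup E] [NormedSpace ℂ E]
    [CompleteSpace E] {f : ℂ → E} {c : ℂ} {R : ℝ} (hR : 0 ≤ R)
    (hf : DiffContOnCl ℂ f (Metric.ball c R)) (n : ℕ) :
    Real.circleAverage (fun z => conj (z - c) ^ n • f z) c R =
      ((R : ℂ) ^ (2 * n) / n !) • iteratedDeriv n f c := by
  rcases hR.eq_or_lt with rfl | hR
  · rcases eq_or_ne n 0 with rfl | hn <;> simp [*]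
  -- On the circle `conj (z - c) = R ^ 2 / (z - c)`, so Cauchy's formula for derivatives applies.
  have hconj : Set.EqOn (fun z => conj (z - c) ^ n • f z)
      (fun z => (R : ℂ) ^ (2 * n) • ((z - c) ^ n)⁻¹ • f z) (Metric.sphere c |R|) := by
    intro z hz
    have hnorm : ‖z - c‖ = R := by simpa [abs_of_pos hR] using hz
    have hne : z - c ≠ 0 := norm_pos_iff.1 (hnorm ▸ hR)
    have hmul : (z - c) * conj (z - c) = (R : ℂ) ^ 2 := by rw [mul_conj', hnorm]
    dsimp only
    rw [smul_smul, pow_mul, ← hmul, mul_pow, mul_right_comm, mul_inv_cancel₀ (pow_ne_zero n hne),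
      one_mul]
  have hcauchy := hf.circleIntegral_one_div_sub_center_pow_smul hR n
  rw [Real.circleAverage_congr_sphere hconj, Real.circleAverage_fun_smul,
    Real.circleAverage_eq_circleIntegral hR.ne']
  simp only [one_div, pow_succ', mul_inv, ← smul_smul] at hcauchy
  rw [hcauchy, smul_smul, smul_smul]
  congr 1
  field_simp [two_pi_I_ne_zero]

lemma integral_norm_mul_norm_le {α E F : Type*} [MeasurableSpace α] {μ : Measure α}
    [NormedAddCommGroup E] [NormedAddCommGroup F] {f : α → E} {g : α → F} (hf : MemLp f 2 μ)
    (hg : MemLp g 2 μ) :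
    ∫ x, ‖f x‖ * ‖g x‖ ∂μ ≤ √(∫ x, ‖f x‖ ^ 2 ∂μ) * √(∫ x, ‖g x‖ ^ 2 ∂μ) := by
  have h := integral_mul_norm_le_Lp_mul_Lq (μ := μ) (f := fun x => ‖f x‖) (g := fun x => ‖g x‖)
    Real.HolderConjugate.two_two (by simpa using hf.norm) (by simpa using hg.norm)
  simpa only [Real.sqrt_eq_rpow, norm_norm, Real.rpow_two] using h

section Gaussian

lemma measurable_gaussDensity :
    Measurable fun z : ℂ => ENNReal.ofReal (Real.exp (-(‖z‖ ^ 2)) / π) := by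
  fun_prop

instance sFinite_gaussMeasure : SFinite gaussMeasure := by
  unfold gaussMeasure
  infer_instance

instance smulInvariantMeasure_circle_gaussMeasure : SMulInvariantMeasure Circle ℂ gaussMeasure :=
  smulInvariantMeasure_withDensity measurable_gaussDensity fun u z => by rw [Circle.norm_smul]

lemma integral_gaussMeasure (g : ℂ → ℝ) :
    ∫ z, g z ∂gaussMeasure = π⁻¹ * ∫ z, g z * Real.exp (-(‖z‖ ^ 2)) := by
  rw [gaussMeasure, integral_withDensity_eq_integral_toReal_smul measurable_gaussDensity (by simp),
    ← integral_const_mul]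
  congr! 2
  rw [ENNReal.toReal_ofReal (by positivity), smul_eq_mul]
  ring

lemma integral_norm_pow_gaussMeasure (n : ℕ) :
    ∫ z : ℂ, ‖z‖ ^ (2 * n) ∂gaussMeasure = n ! := by
  have h := Complex.integral_rpow_mul_exp_neg_rpow (p := 2) (q := (2 * n : ℕ)) (by norm_num)
    (by linarith [Nat.cast_nonneg (α := ℝ) (2 * n)])
  have hGamma : Real.Gamma ((((2 * n : ℕ) : ℝ) + 2) / 2) = n ! := by
    rw [← Real.Gamma_nat_eq_factorial]
    congr 1
    push_cast
    ring
  simp only [Real.rpow_natCast, Real.rpow_two, hGamma] at h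
  rw [integral_gaussMeasure, h]
  field_simp

end Gaussian

section FockSpace

variable {f g : ℂ → ℂ}

lemma MemFock.memLp (hf : MemFock f) : MemLp f 2 gaussMeasure :=
  (memLp_two_iff_integrable_sq_norm hf.1.continuous.aestronglyMeasurable).2 hf.2

lemma memFock_of_fockNormSq_ne_zero (hf : Entire f) (h : fockNormSq f ≠ 0) : MemFock f :=
  ⟨hf, .of_integral_ne_zero h⟩

lemma MemFock.const_mul (hf : MemFock f) (c : ℂ) : MemFock fun z => c * f z :=
  ⟨Differentiable.const_mul hf.1 c, by simpa [mul_pow] using hf.2.const_mul (‖c‖ ^ 2)⟩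

lemma fockNormSq_nonneg (f : ℂ → ℂ) : 0 ≤ fockNormSq f :=
  integral_nonneg fun _ => by positivity

lemma fockNormSq_const_mul (c : ℂ) (f : ℂ → ℂ) :
    fockNormSq (fun z => c * f z) = ‖c‖ ^ 2 * fockNormSq f := by
  simp [fockNormSq, mul_pow, integral_const_mul]

lemma fockInner_const_mul (c : ℂ) (f g : ℂ → ℂ) :
    fockInner (fun z => c * f z) (fun z => c * g z) = (‖c‖ ^ 2 : ℝ) * fockInner f g := by
  rw [fockInner, fockInner, ← integral_const_mul]
  congr! 2
  rw [map_mul, mul_mul_mul_comm, mul_conj', ofReal_pow]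

lemma conj_fockInner (f g : ℂ → ℂ) : conj (fockInner f g) = fockInner g f := by
  rw [fockInner, fockInner, ← integral_conj]
  congr! 2
  rw [map_mul, conj_conj, mul_comm]

lemma inner_toLp_toLp (hf : MemLp f 2 gaussMeasure) (hg : MemLp g 2 gaussMeasure) :
    ⟪hf.toLp f, hg.toLp g⟫_ℂ = fockInner g f := by
  rw [L2.inner_def, fockInner]
  refine integral_congr_ae ?_
  filter_upwards [hf.coeFn_toLp, hg.coeFn_toLp] with z hfz hgz
  rw [hfz, hgz, RCLike.inner_apply]

lemma norm_toLp_sq (hf : MemLp f 2 gaussMeasure) : ‖hf.toLp f‖ ^ 2 = fockNormSq f := by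
  have h : fockInner f f = fockNormSq f := by
    simp only [fockInner, fockNormSq, mul_conj', ← integral_complex_ofReal, ofReal_pow]
  rw [← inner_self_eq_norm_sq (𝕜 := ℂ), inner_toLp_toLp, h, RCLike.re_to_complex, ofReal_re]

lemma fockInner_div_fockNormSq_mem_numRange {ψ τ : ℂ → ℂ} (hf : MemFock f)
    (h0 : fockNormSq f ≠ 0) : fockInner (wcomp ψ τ f) f / fockNormSq f ∈ numRange ψ τ := by
  have hpos : 0 < fockNormSq f := (fockNormSq_nonneg f).lt_of_ne' h0
  let c : ℂ := (√(fockNormSq f) : ℂ)⁻¹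
  have hc : ‖c‖ ^ 2 = (fockNormSq f)⁻¹ := by
    rw [norm_inv, norm_real, Real.norm_eq_abs, inv_pow, sq_abs, Real.sq_sqrt hpos.le]
  refine ⟨fun z => c * f z, hf.const_mul c, ?_, ?_⟩
  · rw [fockNormSq_const_mul, hc, inv_mul_cancel₀ h0]
  · have hw : wcomp ψ τ (fun z => c * f z) = fun z => c * wcomp ψ τ f z :=
      funext fun _ => mul_left_comm _ _ _
    rw [hw, fockInner_const_mul, hc, ofReal_inv, div_eq_inv_mul]

end FockSpace

section Monomials

variable {f : ℂ → ℂ}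

lemma fockNormSq_pow (n : ℕ) : fockNormSq (fun z => z ^ n) = n ! := by
  simp only [fockNormSq, norm_pow, ← pow_mul', integral_norm_pow_gaussMeasure]

lemma memFock_pow (n : ℕ) : MemFock fun z => z ^ n :=
  memFock_of_fockNormSq_ne_zero (differentiable_pow n) (by rw [fockNormSq_pow]; positivity)

lemma fockInner_pow_right (hf : MemFock f) (n : ℕ) :
    fockInner f (fun z => z ^ n) = iteratedDeriv n f 0 := by
  have hint : Integrable (fun z => f z * conj (z ^ n)) gaussMeasure :=
    hf.memLp.integrable_mul (memFock_pow n).memLp.star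
  have havg (z : ℂ) : Real.circleAverage (fun z => f z * conj (z ^ n)) 0 ‖z‖ =
      ((‖z‖ ^ (2 * n) : ℝ) : ℂ) * (iteratedDeriv n f 0 / n !) := by
    have h := circleAverage_conj_pow_smul (norm_nonneg z)
      (Differentiable.diffContOnCl (s := Metric.ball 0 ‖z‖) hf.1) n
    simp only [sub_zero, smul_eq_mul, mul_comm _ (f _), ← map_pow] at h
    rw [h]
    push_cast
    ring
  have hfac : (n ! : ℂ) ≠ 0 := mod_cast n.factorial_ne_zero
  rw [fockInner, ← integral_circleAverage_zero_norm hint]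
  simp only [havg]
  rw [integral_mul_const, integral_complex_ofReal, integral_norm_pow_gaussMeasure, ofReal_natCast,
    mul_div_cancel₀ _ hfac]

/-- The monomial `zⁿ / √n!` as a unit vector of `L²` of the Gaussian measure. -/
noncomputable def monomialLp (n : ℕ) : Lp ℂ 2 gaussMeasure :=
  (√(n !) : ℂ)⁻¹ • (memFock_pow n).memLp.toLp

lemma inner_monomialLp_toLp (hf : MemFock f) (n : ℕ) :
    ⟪monomialLp n, hf.memLp.toLp⟫_ℂ = (√(n !) : ℂ)⁻¹ * iteratedDeriv n f 0 := by
  rw [monomialLp, inner_smul_left, inner_toLp_toLp, fockInner_pow_right hf, map_inv₀, conj_ofReal]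

lemma orthonormal_monomialLp : Orthonormal ℂ monomialLp := by
  rw [orthonormal_iff_ite]
  intro m n
  rw [monomialLp.eq_def n, inner_smul_right, inner_monomialLp_toLp (memFock_pow n),
    iteratedDeriv_fun_pow_zero]
  split_ifs with h
  · have hsq : (√(n !) : ℂ) * √(n !) = n ! := by
      rw [← ofReal_mul, Real.mul_self_sqrt (by positivity), ofReal_natCast]
    have h0 : (√(n !) : ℂ) ≠ 0 := by simp [Nat.factorial_ne_zero]
    subst h
    rw [← hsq]
    field_simp
  · simp

/-- The squared modulus of the coefficient of `f` along the orthonormal monomial `zⁿ / √n!`, that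
is, the mass that `f` carries in the eigenspace of the dilation `C_{az}` for the eigenvalue `aⁿ`. -/
noncomputable def fockWeight (f : ℂ → ℂ) (n : ℕ) : ℝ := ‖iteratedDeriv n f 0‖ ^ 2 / n !

lemma fockWeight_nonneg (f : ℂ → ℂ) (n : ℕ) : 0 ≤ fockWeight f n := by
  unfold fockWeight
  positivity

lemma norm_inner_monomialLp_sq (hf : MemFock f) (n : ℕ) :
    ‖⟪monomialLp n, hf.memLp.toLp⟫_ℂ‖ ^ 2 = fockWeight f n := by
  rw [inner_monomialLp_toLp hf, norm_mul, mul_pow, norm_inv, norm_real, Real.norm_eq_abs, inv_pow,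
    sq_abs, Real.sq_sqrt (by positivity), fockWeight, inv_mul_eq_div]

lemma summable_fockWeight (hf : MemFock f) : Summable (fockWeight f) := by
  simpa only [norm_inner_monomialLp_sq hf] using
    orthonormal_monomialLp.inner_products_summable hf.memLp.toLp

lemma tsum_fockWeight_le (hf : MemFock f) : ∑' n, fockWeight f n ≤ fockNormSq f := by
  simpa only [norm_inner_monomialLp_sq hf, norm_toLp_sq] using
    orthonormal_monomialLp.tsum_inner_products_le hf.memLp.toLp

lemma norm_iteratedDeriv_zero_le (hf : MemFock f) (n : ℕ) :
    ‖iteratedDeriv n f 0‖ ≤ √(n ! * fockNormSq f) := by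
  have h : fockWeight f n ≤ fockNormSq f :=
    ((summable_fockWeight hf).le_tsum n fun m _ => fockWeight_nonneg f m).trans
      (tsum_fockWeight_le hf)
  exact Real.le_sqrt_of_sq_le ((div_le_iff₀' (by positivity)).1 h)

lemma integral_norm_pow_mul_norm_le (hf : MemFock f) (n : ℕ) :
    ∫ z, ‖z ^ n‖ * ‖f z‖ ∂gaussMeasure ≤ √(n ! * fockNormSq f) := by
  rw [← fockNormSq_pow, Real.sqrt_mul (fockNormSq_nonneg _)]
  exact integral_norm_mul_norm_le (memFock_pow n).memLp hf.memLp

lemma norm_iteratedDeriv_zero_mul_integral_le (hf : MemFock f) (n : ℕ) :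
    ‖iteratedDeriv n f 0‖ * ∫ z, ‖z ^ n‖ * ‖f z‖ ∂gaussMeasure ≤ n ! * fockNormSq f := by
  rw [← Real.mul_self_sqrt (mul_nonneg (n !).cast_nonneg (fockNormSq_nonneg f))]
  gcongr
  exacts [norm_iteratedDeriv_zero_le hf n, integral_norm_pow_mul_norm_le hf n]

lemma exists_fockWeight_ne_zero (hf : Entire f) (h : fockNormSq f ≠ 0) :
    ∃ n, fockWeight f n ≠ 0 := by
  contrapose! h
  have hderiv (n : ℕ) : iteratedDeriv n f 0 = 0 := by
    simpa [fockWeight, Nat.factorial_ne_zero] using h n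
  have hzero : f = 0 := funext fun z => by
    simp [← taylorSeries_eq_of_entire' 0 z hf, hderiv]
  simp [hzero, fockNormSq]

end Monomials

section Dilation

variable {f : ℂ → ℂ}

lemma hasSum_fockInner_dilation (hf : MemFock f) {a : ℂ} (ha : ‖a‖ < 1) :
    HasSum (fun n => fockWeight f n * a ^ n) (fockInner (wcomp (fun _ => 1) (a * ·) f) f) := by
  let D (n : ℕ) : ℂ := iteratedDeriv n f 0
  let F (n : ℕ) (z : ℂ) : ℂ := D n * a ^ n / n ! * (z ^ n * conj (f z))
  have hint (n : ℕ) : Integrable (F n) gaussMeasure :=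
    ((memFock_pow n).memLp.integrable_mul hf.memLp.star).const_mul _
  have hbound (n : ℕ) : ∫ z, ‖F n z‖ ∂gaussMeasure ≤ ‖a‖ ^ n * fockNormSq f := by
    calc ∫ z, ‖F n z‖ ∂gaussMeasure
      _ = ‖a‖ ^ n / n ! * (‖D n‖ * ∫ z, ‖z ^ n‖ * ‖f z‖ ∂gaussMeasure) := by
        rw [← integral_const_mul, ← integral_const_mul]
        congr! 2
        simp only [F, norm_mul, norm_div, norm_pow, RCLike.norm_conj, norm_natCast]
        ring
      _ ≤ ‖a‖ ^ n / n ! * (n ! * fockNormSq f) :=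
        mul_le_mul_of_nonneg_left (norm_iteratedDeriv_zero_mul_integral_le hf n) (by positivity)
      _ = ‖a‖ ^ n * fockNormSq f := by field_simp
  have hsummable : Summable fun n => ∫ z, ‖F n z‖ ∂gaussMeasure :=
    .of_nonneg_of_le (fun _ => integral_nonneg fun _ => norm_nonneg _) hbound
      ((summable_geometric_of_lt_one (norm_nonneg a) ha).mul_right _)
  have hterm (n : ℕ) : ∫ z, F n z ∂gaussMeasure = fockWeight f n * a ^ n := by
    have hD : ∫ z, z ^ n * conj (f z) ∂gaussMeasure = conj (D n) := by
      rw [← fockInner, ← conj_fockInner, fockInner_pow_right hf]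
    rw [integral_const_mul, hD, fockWeight, ofReal_div, ofReal_pow, ← mul_conj', ofReal_natCast]
    ring
  have hsum (z : ℂ) : ∑' n, F n z = wcomp (fun _ => 1) (a * ·) f z * conj (f z) := by
    have htaylor := (hasSum_taylorSeries_of_entire hf.1 0 (a * z)).mul_right (conj (f z))
    rw [wcomp, one_mul, ← htaylor.tsum_eq]
    congr! 2 with n
    simp only [F, D, sub_zero, smul_eq_mul, mul_pow]
    ring
  simpa only [hterm, hsum, fockInner] using hasSum_integral_of_summable_integral_norm hint hsummable

lemma fockInner_dilation_mem_Ioc (hf : MemFock f) (hf1 : fockNormSq f = 1) {a : ℝ} (ha0 : 0 < a)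
    (ha1 : a < 1) :
    fockInner (wcomp (fun _ => 1) ((a : ℂ) * ·) f) f ∈ (fun t : ℝ => (t : ℂ)) '' Set.Ioc 0 1 := by
  have hnonneg (n : ℕ) : 0 ≤ fockWeight f n * a ^ n :=
    mul_nonneg (fockWeight_nonneg f n) (by positivity)
  have hle (n : ℕ) : fockWeight f n * a ^ n ≤ fockWeight f n :=
    mul_le_of_le_one_right (fockWeight_nonneg f n) (pow_le_one₀ ha0.le ha1.le)
  have hsum : Summable fun n => fockWeight f n * a ^ n :=
    .of_nonneg_of_le hnonneg hle (summable_fockWeight hf)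
  obtain ⟨m, hm⟩ := exists_fockWeight_ne_zero hf.1 (hf1 ▸ one_ne_zero)
  refine ⟨∑' n, fockWeight f n * a ^ n, ⟨?_, ?_⟩, ?_⟩
  · exact hsum.tsum_pos hnonneg m ((hnonneg m).lt_of_ne' (mul_ne_zero hm (pow_pos ha0 m).ne'))
  · exact (hsum.tsum_le_tsum hle (summable_fockWeight hf)).trans
      ((tsum_fockWeight_le hf).trans_eq hf1)
  · have ha : ‖(a : ℂ)‖ < 1 := by rwa [norm_real, Real.norm_of_nonneg ha0.le]
    rw [← (hasSum_fockInner_dilation hf ha).tsum_eq]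
    exact mod_cast rfl

end Dilation

section Exponential

lemma fockNormSq_exp_const_mul (w : ℂ) :
    fockNormSq (fun z => exp (w * z)) = Real.exp (‖w‖ ^ 2) := by
  have hgauss := GaussianFourier.integral_cexp_neg_mul_sq_norm_add (b := 1) (by simp) 2 (conj w)
  have hexp (z : ℂ) : exp (-1 * (‖z‖ : ℂ) ^ 2 + 2 * ⟪conj w, z⟫_ℝ) =
      ((‖exp (w * z)‖ ^ 2 * Real.exp (-(‖z‖ ^ 2)) : ℝ) : ℂ) := by
    rw [norm_exp, ← Real.exp_nat_mul, ← Real.exp_add, ofReal_exp, Complex.inner, conj_conj,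
      mul_comm z w]
    congr 1
    push_cast
    ring
  simp only [hexp, integral_complex_ofReal] at hgauss
  rw [fockNormSq, integral_gaussMeasure, ← ofReal_inj]
  push_cast at hgauss ⊢
  rw [hgauss, finrank_real_complex]
  norm_num [Real.pi_ne_zero]

lemma memFock_exp_const_mul (w : ℂ) : MemFock fun z => exp (w * z) :=
  memFock_of_fockNormSq_ne_zero (by unfold Entire; fun_prop)
    (by rw [fockNormSq_exp_const_mul]; positivity)

lemma fockWeight_exp_const_mul (w : ℂ) (n : ℕ) :
    fockWeight (fun z => exp (w * z)) n = (‖w‖ ^ 2) ^ n / n ! := by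
  simp only [fockWeight, iteratedDeriv_cexp_const_mul, mul_zero, exp_zero, mul_one, norm_pow,
    pow_right_comm]

lemma fockInner_dilation_exp_const_mul {a : ℂ} (ha : ‖a‖ < 1) (w : ℂ) :
    fockInner (wcomp (fun _ => 1) (a * ·) fun z => exp (w * z)) (fun z => exp (w * z)) =
      exp (a * ‖w‖ ^ 2) := by
  refine (hasSum_fockInner_dilation (memFock_exp_const_mul w) ha).unique ?_
  rw [congrFun exp_eq_exp_ℂ (a * (‖w‖ : ℂ) ^ 2)]
  convert! NormedSpace.expSeries_div_hasSum_exp (a * (‖w‖ : ℂ) ^ 2) using 2 with n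
  rw [fockWeight_exp_const_mul]
  push_cast
  ring

lemma exp_mem_numRange_dilation {a : ℂ} (ha : ‖a‖ < 1) (w : ℂ) :
    exp ((a - 1) * ‖w‖ ^ 2) ∈ numRange (fun _ => 1) (a * ·) := by
  have h := fockInner_div_fockNormSq_mem_numRange (ψ := fun _ => 1) (τ := (a * ·))
    (memFock_exp_const_mul w) (by rw [fockNormSq_exp_const_mul]; positivity)
  rw [fockInner_dilation_exp_const_mul ha, fockNormSq_exp_const_mul, ofReal_exp, ← exp_sub] at h
  convert! h using 2
  push_cast
  ring

lemma ofReal_mem_numRange_dilation {a t : ℝ} (ha : |a| < 1) (ht : t ∈ Set.Ioc 0 1) :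
    (t : ℂ) ∈ numRange (fun _ => 1) ((a : ℂ) * ·) := by
  have ha1 : 0 < 1 - a := sub_pos.2 (abs_lt.1 ha).2
  set s : ℝ := -Real.log t / (1 - a)
  have hs : 0 ≤ s := div_nonneg (neg_nonneg.2 (Real.log_nonpos ht.1.le ht.2)) ha1.le
  have hw : ‖(√s : ℂ)‖ ^ 2 = s := by
    rw [norm_real, Real.norm_eq_abs, sq_abs, Real.sq_sqrt hs]
  have hexp : (a - 1) * s = Real.log t := by
    rw [← neg_sub, neg_mul, mul_div_cancel₀ _ ha1.ne', neg_neg]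
  convert! exp_mem_numRange_dilation (by rwa [norm_real, Real.norm_eq_abs]) √s
  rw [← ofReal_pow, hw, ← ofReal_one, ← ofReal_sub, ← ofReal_mul, hexp, ← ofReal_exp,
    Real.exp_log ht.1]

end Exponential

/-- For `φ(z) = az` with `0 < a < 1` real, the numerical range of `C_φ` on `F²` is the
half-open interval `(0, 1]`; in particular `0 ∉ W(C_φ)`. -/
theorem numRange_Caz_real
    (a : ℝ) (ha0 : 0 < a) (ha1 : a < 1) :
    numRange (fun _ => 1) (fun z => (a : ℂ) * z) = (fun t : ℝ => (t : ℂ)) '' Set.Ioc 0 1 ∧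
    (0 : ℂ) ∉ numRange (fun _ => 1) (fun z => (a : ℂ) * z) := by
  have hrange : numRange (fun _ => 1) (fun z => (a : ℂ) * z) =
      (fun t : ℝ => (t : ℂ)) '' Set.Ioc 0 1 := by
    refine Set.Subset.antisymm ?_ ?_
    · rintro _ ⟨f, hf, hf1, rfl⟩
      exact fockInner_dilation_mem_Ioc hf hf1 ha0 ha1
    · rintro _ ⟨t, ht, rfl⟩
      exact ofReal_mem_numRange_dilation ((abs_of_pos ha0).trans_lt ha1) ht
  refine ⟨hrange, ?_⟩
  rw [hrange]
  rintro ⟨t, ht, h⟩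
  exact ht.1.ne' (ofReal_eq_zero.1 h)
end

section
/- Let b ∈ ℂ, φ ≡ b constant, and ψ a non-zero entire function with C_{ψ,φ} bounded on F². Then C_{ψ,φ} is the rank-one operator f ↦ ⟨f, K_b⟩ ψ, and 0 ∈ W(C_{ψ,φ}). Specifically: (a) if K_b = (c/‖ψ‖²)ψ for some nonzero c, then W(C_{ψ,φ}) is the closed segment from 0 to conj(c); (b) if K_b ⊥ ψ, then W(C_{ψ,φ}) is the closed disk centered at 0 with radius (‖ψ‖/2)e^{|b|²/2}; (c) otherwise W(C_{ψ,φ}) is a closed filled ellipse with foci 0 and ψ(b). -/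
open MeasureTheory Complex

/-!
By the reproducing property, `C_{ψ,φ}` with `φ ≡ b` is the rank-one operator `f ↦ ⟨f, K_b⟩ ψ`. As
soon as some unit vector `e` is orthogonal to `v`, the numerical range of `f ↦ ⟨f, v⟩ u` is the
filled ellipse `‖z‖ + ‖z - ⟨u, v⟩‖ ≤ ‖u‖ ‖v‖`: splitting `u` and `v` along a unit vector `f`, the
Cauchy-Schwarz inequality gives one inclusion; conversely, for a suitable `e`, the unit vectors in
the span of `v` and `e` produce circles centred on the segment between the foci, and by the
intermediate value theorem these fill the ellipse.
-/

section Ellipse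

theorem setOf_norm_add_norm_sub_le_norm {E : Type*} [NormedAddCommGroup E] [NormedSpace ℝ E]
    [StrictConvexSpace ℝ E] (p : E) : {z : E | ‖z‖ + ‖z - p‖ ≤ ‖p‖} = segment ℝ 0 p := by
  ext z
  rw [mem_segment_iff_wbtw, ← dist_add_dist_eq_iff, dist_zero_left, dist_zero_left, dist_eq_norm]
  exact ⟨fun h => le_antisymm h (by simpa using norm_sub_le z (z - p)), le_of_eq⟩

variable {E : Type*} [NormedAddCommGroup E] [InnerProductSpace ℝ E]

/-- Stewart's theorem for the triangle with vertices `0`, `p`, `z`. -/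
theorem norm_sub_smul_sq (z p : E) (t : ℝ) :
    ‖z - t • p‖ ^ 2 = (1 - t) * ‖z‖ ^ 2 + t * ‖z - p‖ ^ 2 - t * (1 - t) * ‖p‖ ^ 2 := by
  rw [norm_sub_sq_real, norm_sub_sq_real, inner_smul_right, norm_smul, mul_pow, Real.norm_eq_abs,
    sq_abs]
  ring

/-- A filled ellipse with foci `0` and `p` is covered by spheres centred on the segment `[0, p]`. -/
theorem exists_norm_sub_smul_sq_eq {z p : E} {s : ℝ} (h : ‖z‖ + ‖z - p‖ ≤ s) :
    ∃ t ∈ Set.Icc (0 : ℝ) 1, ‖z - t • p‖ ^ 2 = t * (1 - t) * (s ^ 2 - ‖p‖ ^ 2) := by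
  have hz := norm_nonneg z
  have hzp := norm_nonneg (z - p)
  -- The equation holds with `≥` at `t = 0` and with `≤` at `t = t₁`.
  set t₁ : ℝ := ‖z‖ / s
  have ht₁ : t₁ ∈ Set.Icc (0 : ℝ) 1 :=
    ⟨div_nonneg hz (by linarith), div_le_one_of_le₀ (by linarith) (by linarith)⟩
  have hzs : ‖z‖ = t₁ * s := (div_mul_cancel_of_imp fun hs => by linarith).symm
  have hle : ‖z - t₁ • p‖ ^ 2 ≤ t₁ * (1 - t₁) * (s ^ 2 - ‖p‖ ^ 2) := by
    have hdist : ‖z - p‖ ^ 2 ≤ ((1 - t₁) * s) ^ 2 :=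
      pow_le_pow_left₀ hzp (by linarith) 2
    rw [norm_sub_smul_sq, hzs]
    linear_combination mul_le_mul_of_nonneg_left hdist ht₁.1
  have hcont : ContinuousOn
      (fun t : ℝ => ‖z - t • p‖ ^ 2 - t * (1 - t) * (s ^ 2 - ‖p‖ ^ 2)) (Set.Icc 0 t₁) := by
    fun_prop
  obtain ⟨t, ht, ht0⟩ := intermediate_value_Icc' ht₁.1 hcont
    (show (0 : ℝ) ∈ Set.Icc _ _ from ⟨sub_nonpos.2 hle, by simp⟩)
  exact ⟨t, ⟨ht.1, ht.2.trans ht₁.2⟩, sub_eq_zero.1 ht0⟩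

end Ellipse

section NumericalRange

open InnerProductSpace

variable {𝕜 V : Type*} [RCLike 𝕜] [NormedAddCommGroup V] [InnerProductSpace 𝕜 V]

/-- The numerical range `{⟨T f, f⟩ : ‖f‖ = 1}` of a bounded operator; the inner product of Mathlib
being conjugate-linear in its first argument, `⟨T f, f⟩` reads `inner 𝕜 f (T f)`. -/
def numericalRange (T : V →L[𝕜] V) : Set 𝕜 :=
  {z | ∃ f : V, ‖f‖ = 1 ∧ ⟪f, T f⟫_𝕜 = z}

theorem inner_rankOne_apply_self (u v f : V) :
    ⟪f, rankOne 𝕜 u v f⟫_𝕜 = ⟪v, f⟫_𝕜 * ⟪f, u⟫_𝕜 := by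
  rw [rankOne_apply, inner_smul_right]

theorem norm_starProjection_span_singleton_mul_norm (v u : V) :
    ‖(𝕜 ∙ v).starProjection u‖ * ‖v‖ = ‖⟪v, u⟫_𝕜‖ := by
  rcases eq_or_ne v 0 with rfl | hv
  · simp
  · have := norm_ne_zero_iff.2 hv
    rw [Submodule.starProjection_singleton, norm_smul, norm_div, RCLike.norm_ofReal, abs_sq]
    field_simp

/-- The Lagrange identity behind the Cauchy-Schwarz inequality. -/
theorem sq_norm_mul_norm_eq_add (v u : V) :
    (‖u‖ * ‖v‖) ^ 2 = ‖⟪v, u⟫_𝕜‖ ^ 2 + (‖(𝕜 ∙ v)ᗮ.starProjection u‖ * ‖v‖) ^ 2 := by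
  rw [mul_pow, Submodule.norm_sq_eq_add_norm_sq_starProjection u (𝕜 ∙ v), add_mul, ← mul_pow,
    ← mul_pow, norm_starProjection_span_singleton_mul_norm]

/-- Splitting `u` and `v` along a unit vector `f` turns `⟪v, u⟫_𝕜 - ⟪v, f⟫_𝕜 * ⟪f, u⟫_𝕜` into the
inner product of the two components orthogonal to `f`. -/
theorem norm_add_norm_sub_le_of_mem_numericalRange_rankOne {u v : V} {z : 𝕜}
    (hz : z ∈ numericalRange (rankOne 𝕜 u v)) : ‖z‖ + ‖z - ⟪v, u⟫_𝕜‖ ≤ ‖u‖ * ‖v‖ := by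
  obtain ⟨f, hf, rfl⟩ := hz
  set P : V →L[𝕜] V := (𝕜 ∙ f)ᗮ.starProjection
  have hP (x : V) : P x = x - ⟪f, x⟫_𝕜 • f := by
    rw [← Submodule.starProjection_unit_singleton 𝕜 hf, eq_sub_iff_add_eq',
      Submodule.starProjection_add_starProjection_orthogonal]
  have hsq (x : V) : ‖x‖ ^ 2 = ‖⟪f, x⟫_𝕜‖ ^ 2 + ‖P x‖ ^ 2 := by
    simpa only [hf, mul_one] using sq_norm_mul_norm_eq_add (𝕜 := 𝕜) f x
  have hsub : ⟪v, f⟫_𝕜 * ⟪f, u⟫_𝕜 - ⟪v, u⟫_𝕜 = -⟪P v, P u⟫_𝕜 := by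
    simp only [hP, inner_sub_left, inner_sub_right, inner_smul_left, inner_smul_right,
      inner_conj_symm, inner_self_eq_norm_sq_to_K, hf, map_one]
    ring
  calc ‖⟪f, rankOne 𝕜 u v f⟫_𝕜‖ + ‖⟪f, rankOne 𝕜 u v f⟫_𝕜 - ⟪v, u⟫_𝕜‖
      = ‖⟪f, u⟫_𝕜‖ * ‖⟪f, v⟫_𝕜‖ + ‖⟪P v, P u⟫_𝕜‖ := by
        rw [inner_rankOne_apply_self, hsub, norm_neg, norm_mul, norm_inner_symm v f, mul_comm]
    _ ≤ ‖⟪f, u⟫_𝕜‖ * ‖⟪f, v⟫_𝕜‖ + ‖P v‖ * ‖P u‖ := by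
        gcongr
        exact norm_inner_le_norm _ _
    _ ≤ ‖u‖ * ‖v‖ := by
        refine (sq_le_sq₀ (by positivity) (by positivity)).1 ?_
        rw [mul_pow, hsq u, hsq v]
        linear_combination sq_nonneg (‖⟪f, u⟫_𝕜‖ * ‖P v‖ - ‖⟪f, v⟫_𝕜‖ * ‖P u‖)

theorem exists_mem_inner_eq_norm_starProjection {U : Submodule 𝕜 V} [U.HasOrthogonalProjection]
    (hU : U ≠ ⊥) (u : V) : ∃ e ∈ U, ‖e‖ = 1 ∧ ⟪e, u⟫_𝕜 = ‖U.starProjection u‖ := by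
  have inner_right {x : V} (hx : x ∈ U) : ⟪x, u⟫_𝕜 = ⟪x, U.starProjection u⟫_𝕜 := by
    rw [← Submodule.inner_starProjection_left_eq_right, Submodule.starProjection_eq_self_iff.2 hx]
  by_cases hu : U.starProjection u = 0
  · obtain ⟨w, hwU, hw⟩ := U.exists_mem_ne_zero_of_ne_bot hU
    refine ⟨(‖w‖ : 𝕜)⁻¹ • w, U.smul_mem _ hwU, norm_smul_inv_norm hw, ?_⟩
    rw [inner_smul_left, inner_right hwU, hu]
    simp
  · have hmem : U.starProjection u ∈ U := U.starProjection_apply_mem u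
    refine ⟨(‖U.starProjection u‖ : 𝕜)⁻¹ • U.starProjection u, U.smul_mem _ hmem,
      norm_smul_inv_norm hu, ?_⟩
    have : (‖U.starProjection u‖ : 𝕜) ≠ 0 := by simpa using hu
    rw [inner_smul_left, inner_right hmem, inner_self_eq_norm_sq_to_K]
    simp only [map_inv₀, RCLike.conj_ofReal]
    field_simp

/-- For `‖ω‖ = 1` the unit vector `√t • v / ‖v‖ + √(1 - t) • ω̄ • e` realizes the point of phase `ω`
on the circle about `t * ⟪v, u⟫_𝕜`. -/
theorem mem_numericalRange_rankOne_of_unit_orthogonal {u v e : V} (hv : v ≠ 0) (he : ‖e‖ = 1)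
    (hve : ⟪v, e⟫_𝕜 = 0) {t : ℝ} (ht : t ∈ Set.Icc (0 : ℝ) 1) {ω : 𝕜} (hω : ‖ω‖ = 1) :
    t * ⟪v, u⟫_𝕜 + ω * (‖v‖ * √(t * (1 - t)) : ℝ) * ⟪e, u⟫_𝕜 ∈ numericalRange (rankOne 𝕜 u v) := by
  have hv' : (‖v‖ : 𝕜) ≠ 0 := by simpa using hv
  have hsqrt : (√t : 𝕜) * √t = t := by exact_mod_cast Real.mul_self_sqrt ht.1
  set x : V := (√t : 𝕜) • (‖v‖ : 𝕜)⁻¹ • v with hx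
  set y : V := ((√(1 - t) : 𝕜) * (starRingEnd 𝕜) ω) • e with hy
  refine ⟨x + y, ?_, ?_⟩
  · have hxn : ‖x‖ = √t := by
      simp [hx, norm_smul, hv]
    have hyn : ‖y‖ = √(1 - t) := by
      simp [hy, norm_smul, he, hω]
    have hxy : ⟪x, y⟫_𝕜 = 0 := by
      simp only [hx, hy, inner_smul_left, inner_smul_right, hve, mul_zero]
    have hsum := norm_add_sq_eq_norm_sq_add_norm_sq_of_inner_eq_zero x y hxy
    rw [← pow_two, hxn, hyn, Real.mul_self_sqrt ht.1, Real.mul_self_sqrt (sub_nonneg.2 ht.2),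
      add_sub_cancel] at hsum
    exact (pow_eq_one_iff_of_nonneg (norm_nonneg _) two_ne_zero).1 hsum
  · have hleft : ⟪v, x + y⟫_𝕜 = √t * ‖v‖ := by
      rw [inner_add_right, hx, hy]
      simp only [inner_smul_right, hve, inner_self_eq_norm_sq_to_K]
      field_simp
      ring
    have hright : ⟪x + y, u⟫_𝕜 = √t * (‖v‖ : 𝕜)⁻¹ * ⟪v, u⟫_𝕜 + √(1 - t) * ω * ⟪e, u⟫_𝕜 := by
      simp [inner_add_left, hx, hy, inner_smul_left, mul_assoc]
    rw [inner_rankOne_apply_self, hleft, hright, Real.sqrt_mul ht.1]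
    push_cast
    rw [← hsqrt]
    field_simp

/-- The elliptical range theorem for rank-one operators. -/
theorem numericalRange_rankOne (u : V) {v : V} (hv : (𝕜 ∙ v)ᗮ ≠ ⊥) :
    numericalRange (rankOne 𝕜 u v) = {z | ‖z‖ + ‖z - ⟪v, u⟫_𝕜‖ ≤ ‖u‖ * ‖v‖} := by
  refine Set.Subset.antisymm
    (fun z hz => norm_add_norm_sub_le_of_mem_numericalRange_rankOne hz) fun z hz => ?_
  obtain ⟨e, hemem, he, heu⟩ := exists_mem_inner_eq_norm_starProjection hv u
  rcases eq_or_ne v 0 with rfl | hv0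
  · have hz0 : z = 0 := by
      have : ‖z‖ + ‖z‖ ≤ 0 := by simpa using hz
      exact norm_eq_zero.1 (by linarith [norm_nonneg z])
    exact ⟨e, he, by simp [hz0]⟩
  obtain ⟨t, ht, htz⟩ := exists_norm_sub_smul_sq_eq hz
  set q : ℝ := ‖v‖ * √(t * (1 - t)) * ‖(𝕜 ∙ v)ᗮ.starProjection u‖ with hq
  have hdist : ‖z - t • ⟪v, u⟫_𝕜‖ = q := by
    rw [← sq_eq_sq₀ (norm_nonneg _) (by positivity), htz, sq_norm_mul_norm_eq_add (𝕜 := 𝕜), hq,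
      mul_pow, mul_pow, mul_pow, Real.sq_sqrt (mul_nonneg ht.1 (sub_nonneg.2 ht.2))]
    ring
  obtain ⟨ω, hω, hωz⟩ := RCLike.exists_norm_mul_eq_self (z - t • ⟪v, u⟫_𝕜)
  convert mem_numericalRange_rankOne_of_unit_orthogonal (u := u) hv0 he
    (Submodule.mem_orthogonal_singleton_iff_inner_right.1 hemem) ht hω using 1
  rw [heu, mul_assoc, ← RCLike.ofReal_mul, ← hq, ← hdist, hωz, RCLike.real_smul_eq_coe_mul]
  ring

theorem zero_mem_numericalRange_rankOne (u : V) {v : V} (hv : (𝕜 ∙ v)ᗮ ≠ ⊥) :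
    (0 : 𝕜) ∈ numericalRange (rankOne 𝕜 u v) := by
  rw [numericalRange_rankOne u hv]
  simpa [mul_comm] using norm_inner_le_norm (𝕜 := 𝕜) v u

theorem numericalRange_rankOne_smul_right (u : V) {a : 𝕜} (hv : (𝕜 ∙ (a • u))ᗮ ≠ ⊥) :
    numericalRange (rankOne 𝕜 u (a • u)) = segment ℝ 0 ⟪a • u, u⟫_𝕜 := by
  have hnorm : ‖u‖ * ‖a • u‖ = ‖⟪a • u, u⟫_𝕜‖ := by
    rw [inner_smul_left, norm_smul, norm_mul, RCLike.norm_conj, inner_self_eq_norm_sq_to_K,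
      norm_pow, RCLike.norm_ofReal, abs_norm]
    ring
  rw [numericalRange_rankOne u hv, hnorm, setOf_norm_add_norm_sub_le_norm]

theorem numericalRange_rankOne_of_inner_eq_zero {u v : V} (hv : (𝕜 ∙ v)ᗮ ≠ ⊥)
    (hvu : ⟪v, u⟫_𝕜 = 0) :
    numericalRange (rankOne 𝕜 u v) = Metric.closedBall 0 (‖u‖ * ‖v‖ / 2) := by
  ext z
  rw [numericalRange_rankOne u hv, Set.mem_ofPred_eq, hvu, sub_zero, mem_closedBall_zero_iff,
    le_div_iff₀ two_pos, mul_two]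

end NumericalRange

section GaussianMeasure

/-- Averaging over rotations turns the mean value property on circles into one for `μ`. -/
theorem integral_eq_smul_apply_zero_of_rotation_invariant {E : Type*} [NormedAddCommGroup E]
    [NormedSpace ℂ E] [CompleteSpace E] {μ : Measure ℂ} [IsFiniteMeasure μ]
    (hμ : ∀ a : Circle, MeasurePreserving (rotation a) μ μ) {g : ℂ → E}
    (hg : Differentiable ℂ g) (hgi : Integrable g μ) :
    ∫ z, g z ∂μ = μ.real Set.univ • g 0 := by
  set rot : ℝ → ℂ → ℂ := fun θ => rotation (Circle.exp θ)
  have hrot (θ : ℝ) : ∫ z, g (rot θ z) ∂μ = ∫ z, g z ∂μ :=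
    (hμ (Circle.exp θ)).integral_comp
      (rotation (Circle.exp θ)).toHomeomorph.measurableEmbedding g
  have hmean (z : ℂ) : ∫ θ in (0 : ℝ)..2 * Real.pi, g (rot θ z) = (2 * Real.pi) • g 0 := by
    have h := (hg.comp (differentiable_id.mul_const z)).diffContOnCl.circleAverage
      (c := 0) (R := 1)
    rw [Real.circleAverage_def, inv_smul_eq_iff₀ (by positivity)] at h
    simpa [rot, circleMap] using h
  have hprod : Integrable (Function.uncurry fun θ z => g (rot θ z))
      ((volume.restrict (Set.uIoc 0 (2 * Real.pi))).prod μ) := by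
    have hmeas : Measurable (Function.uncurry rot) := by
      simp only [Function.uncurry_def, rot, rotation_apply]
      fun_prop
    rw [Set.uIoc_of_le (by positivity)]
    exact ((MeasurePreserving.id _).skew_product hmeas
      (.of_forall fun θ => (hμ (Circle.exp θ)).map_eq)).integrable_comp_of_integrable
      (hgi.comp_snd _)
  have hswap := intervalIntegral_integral_swap hprod
  simp only [hmean, hrot, intervalIntegral.integral_const, sub_zero, integral_const] at hswap
  rw [smul_comm] at hswap
  exact smul_right_injective E (show 2 * Real.pi ≠ 0 by positivity) hswap

/-- The density of `gaussMeasure` with respect to the Lebesgue measure. -/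
noncomputable def gaussDensity (z : ℂ) : ℝ := Real.exp (-(‖z‖ ^ 2)) / Real.pi

theorem gaussDensity_nonneg (z : ℂ) : 0 ≤ gaussDensity z := by
  unfold gaussDensity
  positivity

theorem measurable_gaussDensity_s12 : Measurable gaussDensity := by
  unfold gaussDensity
  fun_prop

theorem integral_gaussDensity : ∫ z, gaussDensity z = 1 := by
  have h := GaussianFourier.integral_rexp_neg_mul_sq_norm (V := ℂ) one_pos
  simp only [neg_mul, one_mul, Complex.finrank_real_complex, Nat.cast_ofNat, div_one,
    div_self (two_ne_zero' ℝ), Real.rpow_one] at h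
  simp only [gaussDensity, integral_div, h, div_self Real.pi_ne_zero]

theorem gaussMeasure_eq_withDensity :
    gaussMeasure = volume.withDensity fun z => ENNReal.ofReal (gaussDensity z) := rfl

instance isProbabilityMeasure_gaussMeasure : IsProbabilityMeasure gaussMeasure := by
  have hdi : Integrable gaussDensity := .of_integral_ne_zero (by simp [integral_gaussDensity])
  constructor
  rw [gaussMeasure_eq_withDensity, withDensity_apply _ .univ, Measure.restrict_univ,
    ← ofReal_integral_eq_lintegral_ofReal hdi (.of_forall gaussDensity_nonneg),
    integral_gaussDensity, ENNReal.ofReal_one]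

theorem measurePreserving_rotation_gaussMeasure (a : Circle) :
    MeasurePreserving (rotation a) gaussMeasure gaussMeasure := by
  have hvol : MeasurePreserving (rotation a) := (rotation a).measurePreserving
  refine ⟨hvol.measurable, ?_⟩
  ext s hs
  rw [Measure.map_apply hvol.measurable hs, gaussMeasure_eq_withDensity,
    withDensity_apply _ (hvol.measurable hs), withDensity_apply _ hs,
    ← hvol.setLIntegral_comp_preimage hs measurable_gaussDensity_s12.ennreal_ofReal]
  simp only [gaussDensity, LinearIsometryEquiv.norm_map]

section Shift

variable {E : Type*} [NormedAddCommGroup E] [NormedSpace ℝ E] {g : ℂ → E}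

theorem integral_gaussMeasure_s12 (g : ℂ → E) :
    ∫ z, g z ∂gaussMeasure = ∫ z, gaussDensity z • g z := by
  rw [gaussMeasure_eq_withDensity,
    integral_withDensity_eq_integral_toReal_smul measurable_gaussDensity_s12.ennreal_ofReal (by simp)]
  simp only [ENNReal.toReal_ofReal (gaussDensity_nonneg _)]

theorem integrable_gaussMeasure_iff :
    Integrable g gaussMeasure ↔ Integrable fun z => gaussDensity z • g z := by
  rw [gaussMeasure_eq_withDensity,
    integrable_withDensity_iff_integrable_smul' measurable_gaussDensity_s12.ennreal_ofReal (by simp)]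
  simp only [ENNReal.toReal_ofReal (gaussDensity_nonneg _)]

/-- The Radon-Nikodym derivative at `z` of the translate of `gaussMeasure` by `-b` with respect to
`gaussMeasure`, as in the Cameron-Martin formula. -/
noncomputable def gaussShift (b z : ℂ) : ℝ :=
  Real.exp (-(‖b‖ ^ 2 + 2 * ((starRingEnd ℂ) b * z).re))

theorem gaussDensity_add (z b : ℂ) :
    gaussDensity (z + b) = gaussDensity z * gaussShift b z := by
  rw [gaussDensity, gaussDensity, gaussShift, div_mul_eq_mul_div, ← Real.exp_add,
    norm_add_sq_real, Complex.inner, mul_comm ((starRingEnd ℂ) b), mul_comm z]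
  congr 2
  simp only [mul_re, conj_re, conj_im, mul_neg, sub_neg_eq_add, neg_add_rev, neg_mul]
  ring

theorem integral_gaussMeasure_eq_integral_gaussShift (g : ℂ → E) (b : ℂ) :
    ∫ z, g z ∂gaussMeasure = ∫ z, gaussShift b z • g (z + b) ∂gaussMeasure := by
  rw [integral_gaussMeasure_s12, integral_gaussMeasure_s12,
    ← integral_add_right_eq_self (fun z => gaussDensity z • g z) b]
  simp only [gaussDensity_add, mul_smul]

theorem integrable_gaussMeasure_iff_gaussShift (b : ℂ) :
    Integrable g gaussMeasure ↔
      Integrable (fun z => gaussShift b z • g (z + b)) gaussMeasure := by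
  rw [integrable_gaussMeasure_iff, integrable_gaussMeasure_iff,
    ← (measurePreserving_add_right volume b).integrable_comp_emb
      (measurableEmbedding_addRight b)]
  simp only [Function.comp_def, gaussDensity_add, mul_smul]

end Shift

end GaussianMeasure

section FockSpace

theorem fockInner_self (f : ℂ → ℂ) : fockInner f f = fockNormSq f := by
  rw [fockInner, fockNormSq, ← integral_complex_ofReal]
  simp only [Complex.mul_conj', Complex.ofReal_pow]

theorem fockInner_const_mul_left (a : ℂ) (f g : ℂ → ℂ) :
    fockInner (fun z => a * f z) g = a * fockInner f g := by
  simp only [fockInner, mul_assoc, integral_const_mul]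

namespace MemFock

variable {f g : ℂ → ℂ}

theorem iff_entire_and_memLp : MemFock f ↔ Entire f ∧ MemLp f 2 gaussMeasure :=
  and_congr_right fun hf =>
    (memLp_two_iff_integrable_sq_norm hf.continuous.aestronglyMeasurable).symm

theorem memLp_s12 (hf : MemFock f) : MemLp f 2 gaussMeasure := (iff_entire_and_memLp.1 hf).2

theorem integrable_mul_conj (hf : MemFock f) (hg : MemFock g) :
    Integrable (fun z => f z * (starRingEnd ℂ) (g z)) gaussMeasure :=
  hf.memLp_s12.integrable_mul hg.memLp_s12.star

theorem zero : MemFock 0 := iff_entire_and_memLp.2 ⟨differentiable_const 0, MemLp.zero⟩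

theorem add (hf : MemFock f) (hg : MemFock g) : MemFock (f + g) :=
  iff_entire_and_memLp.2 ⟨Differentiable.add hf.1 hg.1, hf.memLp_s12.add hg.memLp_s12⟩

theorem const_smul (hf : MemFock f) (a : ℂ) : MemFock (a • f) :=
  iff_entire_and_memLp.2 ⟨Differentiable.const_smul hf.1 a, hf.memLp_s12.const_smul a⟩

end MemFock

/-- The Fock space `F²` as a Hilbert space: the classes in `L²` of the entire square-integrable
functions. -/
def fockSpace : Submodule ℂ (Lp ℂ 2 gaussMeasure) where
  carrier := {F | ∃ (f : ℂ → ℂ) (hf : MemFock f), hf.memLp_s12.toLp = F}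
  add_mem' := by
    rintro _ _ ⟨f, hf, rfl⟩ ⟨g, hg, rfl⟩
    exact ⟨f + g, hf.add hg, rfl⟩
  zero_mem' := ⟨0, MemFock.zero, rfl⟩
  smul_mem' := by
    rintro a _ ⟨f, hf, rfl⟩
    exact ⟨a • f, hf.const_smul a, rfl⟩

namespace MemFock

variable {f g : ℂ → ℂ}

/-- The class of `f` in `fockSpace`. -/
noncomputable def toFockSpace (hf : MemFock f) : fockSpace := ⟨hf.memLp_s12.toLp, f, hf, rfl⟩

theorem toFockSpace_surjective (F : fockSpace) :
    ∃ (f : ℂ → ℂ) (hf : MemFock f), hf.toFockSpace = F := by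
  obtain ⟨_, f, hf, rfl⟩ := F
  exact ⟨f, hf, rfl⟩

theorem inner_toFockSpace (hf : MemFock f) (hg : MemFock g) :
    inner ℂ hf.toFockSpace hg.toFockSpace = fockInner g f := by
  rw [Submodule.coe_inner, L2.inner_def, fockInner]
  refine integral_congr_ae ?_
  filter_upwards [hf.memLp_s12.coeFn_toLp, hg.memLp_s12.coeFn_toLp] with z hfz hgz
  simp only [toFockSpace, hfz, hgz, RCLike.inner_apply]

theorem norm_toFockSpace (hf : MemFock f) : ‖hf.toFockSpace‖ = √(fockNormSq f) := by
  rw [norm_eq_sqrt_re_inner (𝕜 := ℂ), inner_toFockSpace, fockInner_self]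
  rfl

end MemFock

/-- The reproducing kernel `K_b` of the Fock space. -/
noncomputable def fockKernel (b : ℂ) : ℂ → ℂ := fun z => exp ((starRingEnd ℂ) b * z)

theorem gaussShift_mul_conj_fockKernel (b z : ℂ) :
    gaussShift b z * (starRingEnd ℂ) (fockKernel b (z + b)) = exp (-((starRingEnd ℂ) b * z)) := by
  rw [gaussShift, fockKernel, ← exp_conj, ofReal_exp, ← exp_add]
  congr 1
  push_cast
  rw [Complex.re_eq_add_conj, ← Complex.conj_mul']
  simp only [map_mul, map_add, conj_conj]
  ring

theorem gaussShift_mul_fockKernel_sq (b z : ℂ) :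
    gaussShift b z * ‖fockKernel b (z + b)‖ ^ 2 = Real.exp (‖b‖ ^ 2) := by
  rw [gaussShift, fockKernel, Complex.norm_exp, ← Real.exp_nat_mul, ← Real.exp_add, mul_add,
    add_re, Complex.conj_mul', ← ofReal_pow, ofReal_re]
  congr 1
  push_cast
  ring

theorem memFock_fockKernel (b : ℂ) : MemFock (fockKernel b) := by
  refine ⟨by unfold Entire fockKernel; fun_prop, ?_⟩
  rw [integrable_gaussMeasure_iff_gaussShift b]
  simp only [smul_eq_mul, gaussShift_mul_fockKernel_sq]
  exact integrable_const _

/-- The reproducing property: after the substitution `z ↦ z + b` it is the mean value property of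
the entire function `z ↦ f (z + b) * exp (-b̄ z)`. -/
theorem fockInner_fockKernel {f : ℂ → ℂ} (hf : MemFock f) (b : ℂ) :
    fockInner f (fockKernel b) = f b := by
  set g : ℂ → ℂ := fun z => f (z + b) * exp (-((starRingEnd ℂ) b * z)) with hg
  have hgd : Differentiable ℂ g := by
    have : Differentiable ℂ f := hf.1
    fun_prop
  have hshift (z : ℂ) :
      gaussShift b z • (f (z + b) * (starRingEnd ℂ) (fockKernel b (z + b))) = g z := by
    rw [Complex.real_smul, mul_left_comm, gaussShift_mul_conj_fockKernel]
  have hgint : Integrable g gaussMeasure := by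
    simpa only [hshift] using
      (integrable_gaussMeasure_iff_gaussShift b).1 (hf.integrable_mul_conj (memFock_fockKernel b))
  calc fockInner f (fockKernel b)
      = ∫ z, g z ∂gaussMeasure := by
        rw [fockInner, integral_gaussMeasure_eq_integral_gaussShift _ b]
        simp only [hshift]
    _ = g 0 := by
        simpa using integral_eq_smul_apply_zero_of_rotation_invariant
          measurePreserving_rotation_gaussMeasure hgd hgint
    _ = f b := by simp [hg]

theorem fockNormSq_fockKernel (b : ℂ) : fockNormSq (fockKernel b) = Real.exp (‖b‖ ^ 2) := by
  rw [fockNormSq, integral_gaussMeasure_eq_integral_gaussShift _ b]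
  simp [gaussShift_mul_fockKernel_sq]

theorem norm_toFockSpace_fockKernel (b : ℂ) :
    ‖(memFock_fockKernel b).toFockSpace‖ = Real.exp (‖b‖ ^ 2 / 2) := by
  rw [MemFock.norm_toFockSpace, fockNormSq_fockKernel, Real.exp_half]

theorem orthogonal_span_fockKernel_ne_bot (b : ℂ) :
    (ℂ ∙ (memFock_fockKernel b).toFockSpace)ᗮ ≠ ⊥ := by
  -- The function `z ↦ 1 - exp (z - b)` vanishes at `b` but not at `b + 1`.
  set f : ℂ → ℂ := fockKernel 0 + (-exp (-b)) • fockKernel 1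
  have hf : MemFock f := (memFock_fockKernel 0).add ((memFock_fockKernel 1).const_smul _)
  have hfz (z : ℂ) : f z = 1 - exp (z - b) := by
    simp [f, fockKernel, ← exp_add, neg_add_eq_sub, ← sub_eq_add_neg]
  have hinner (z : ℂ) :
      inner ℂ (memFock_fockKernel z).toFockSpace hf.toFockSpace = 1 - exp (z - b) := by
    rw [MemFock.inner_toFockSpace, fockInner_fockKernel hf, hfz]
  intro hbot
  have hmem : hf.toFockSpace ∈ (ℂ ∙ (memFock_fockKernel b).toFockSpace)ᗮ := by
    rw [Submodule.mem_orthogonal_singleton_iff_inner_right, hinner, sub_self, exp_zero, sub_self]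
  have hzero : hf.toFockSpace = 0 := by rwa [hbot, Submodule.mem_bot] at hmem
  have he : exp (1 : ℝ) = (1 : ℝ) := by
    simpa [hzero, eq_sub_iff_add_eq] using hinner (b + 1)
  rw [← ofReal_exp, ofReal_inj] at he
  simp at he

end FockSpace

section WeightedComposition

open InnerProductSpace

variable {ψ : ℂ → ℂ} {b : ℂ}

theorem wcomp_const (ψ f : ℂ → ℂ) (b : ℂ) : wcomp ψ (fun _ => b) f = fun z => f b * ψ z :=
  funext fun _ => mul_comm _ _

theorem BoundedWCO.memFock_of_const (h : BoundedWCO ψ fun _ => b) : MemFock ψ := by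
  obtain ⟨C, hC⟩ := h
  simpa [wcomp_const, fockKernel] using (hC _ (memFock_fockKernel 0)).1

theorem numRange_const (hψ : MemFock ψ) (b : ℂ) :
    numRange ψ (fun _ => b) =
      numericalRange (rankOne ℂ hψ.toFockSpace (memFock_fockKernel b).toFockSpace) := by
  have hinner {f : ℂ → ℂ} (hf : MemFock f) :
      inner ℂ hf.toFockSpace
        (rankOne ℂ hψ.toFockSpace (memFock_fockKernel b).toFockSpace hf.toFockSpace) =
      fockInner (wcomp ψ (fun _ => b) f) f := by
    rw [inner_rankOne_apply_self, MemFock.inner_toFockSpace, MemFock.inner_toFockSpace,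
      fockInner_fockKernel hf, wcomp_const, fockInner_const_mul_left]
  have hunit {f : ℂ → ℂ} (hf : MemFock f) : ‖hf.toFockSpace‖ = 1 ↔ fockNormSq f = 1 := by
    rw [MemFock.norm_toFockSpace, Real.sqrt_eq_one]
  ext w
  constructor
  · rintro ⟨f, hf, hf1, rfl⟩
    exact ⟨hf.toFockSpace, (hunit hf).2 hf1, hinner hf⟩
  · rintro ⟨F, hF, rfl⟩
    obtain ⟨f, hf, rfl⟩ := MemFock.toFockSpace_surjective F
    exact ⟨f, hf, (hunit hf).1 hF, hinner hf⟩

theorem numRange_const_of_fockKernel_eq_smul {a : ℂ} (hψ : MemFock ψ)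
    (h : fockKernel b = a • ψ) :
    numRange ψ (fun _ => b) = segment ℝ 0 ((starRingEnd ℂ) a * fockNormSq ψ) := by
  have hk : (memFock_fockKernel b).toFockSpace = a • hψ.toFockSpace := by
    simp only [h]
    rfl
  have hperp := orthogonal_span_fockKernel_ne_bot b
  rw [hk] at hperp
  rw [numRange_const hψ, hk, numericalRange_rankOne_smul_right _ hperp, inner_smul_left,
    MemFock.inner_toFockSpace, fockInner_self]

end WeightedComposition

/-- Remark 2.4: for constant symbol `φ ≡ b` and nonzero entire `ψ` with `C_{ψ,φ}` bounded,
`C_{ψ,φ}` is the rank-one operator `f ↦ ⟨f, K_b⟩ψ` and `0 ∈ W(C_{ψ,φ})`. Moreover: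
(a) if `K_b = (c/‖ψ‖²)ψ` for some `c ≠ 0` then `W(C_{ψ,φ})` is the segment from `0` to `c̄`;
(b) if `K_b ⊥ ψ` then `W(C_{ψ,φ})` is the closed disk of radius `(‖ψ‖/2)e^{|b|²/2}` about `0`;
(c) otherwise `W(C_{ψ,φ})` is a closed filled ellipse with foci `0` and `ψ(b)`. -/
theorem numRange_constant_symbol
    (b : ℂ) (ψ : ℂ → ℂ) (hψ : Entire ψ) (hψ0 : ψ ≠ 0)
    (φ : ℂ → ℂ) (hφ : φ = fun _ => b)
    (hbdd : BoundedWCO ψ φ)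
    (K : ℂ → ℂ) (hK : K = fun z => Complex.exp ((starRingEnd ℂ) b * z)) :
    (∀ f : ℂ → ℂ, MemFock f → wcomp ψ φ f = fun z => fockInner f K * ψ z) ∧
    (0 : ℂ) ∈ numRange ψ φ ∧
    (∀ c : ℂ, c ≠ 0 → K = (fun z => c / (fockNormSq ψ : ℂ) * ψ z) →
      numRange ψ φ = segment ℝ (0 : ℂ) ((starRingEnd ℂ) c)) ∧
    (fockInner K ψ = 0 →
      numRange ψ φ =
        Metric.closedBall (0 : ℂ) (Real.sqrt (fockNormSq ψ) / 2 * Real.exp (‖b‖ ^ 2 / 2))) ∧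
    ((¬∃ c : ℂ, c ≠ 0 ∧ K = fun z => c / (fockNormSq ψ : ℂ) * ψ z) → fockInner K ψ ≠ 0 →
      ∃ s : ℝ, ‖ψ b‖ ≤ s ∧
        numRange ψ φ = {z : ℂ | dist z 0 + dist z (ψ b) ≤ s}) := by
  subst hφ
  obtain rfl : K = fockKernel b := hK
  have hψF := hbdd.memFock_of_const
  have hperp := orthogonal_span_fockKernel_ne_bot b
  have hψb : inner ℂ (memFock_fockKernel b).toFockSpace hψF.toFockSpace = ψ b := by
    rw [MemFock.inner_toFockSpace, fockInner_fockKernel hψF]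
  refine ⟨fun f hf => by rw [wcomp_const, fockInner_fockKernel hf], ?_, fun c _ hKc => ?_,
    fun horth => ?_, fun _ _ => ?_⟩
  · rw [numRange_const hψF]
    exact zero_mem_numericalRange_rankOne _ hperp
  · have hN : (fockNormSq ψ : ℂ) ≠ 0 := fun hN => by
      simpa [hN, fockKernel] using congrFun hKc 0
    rw [numRange_const_of_fockKernel_eq_smul hψF hKc, map_div₀, conj_ofReal,
      div_mul_cancel₀ _ hN]
  · rw [← MemFock.inner_toFockSpace hψF (memFock_fockKernel b)] at horth
    rw [numRange_const hψF,
      numericalRange_rankOne_of_inner_eq_zero hperp (inner_eq_zero_symm.1 horth),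
      hψF.norm_toFockSpace, norm_toFockSpace_fockKernel, mul_div_right_comm]
  · refine ⟨‖hψF.toFockSpace‖ * ‖(memFock_fockKernel b).toFockSpace‖, ?_, ?_⟩
    · simpa only [hψb, mul_comm] using
        norm_inner_le_norm (𝕜 := ℂ) (memFock_fockKernel b).toFockSpace hψF.toFockSpace
    · simp only [numRange_const hψF, numericalRange_rankOne _ hperp, hψb, dist_eq_norm, sub_zero]
end
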